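/- arXiv:2205.09516 — 2 statements merged into one kernel-verified Lean document; each statement's English description precedes it below -/
import Mathlib

section
/- For every α ∈ (0,1), (1/π)·∫₀^∞ arctan( sin((1−α)π/2) / ( u^{3−α} + cos((1−α)π/2) ) ) du = sin( (π/(3−α))·((1−α)/2) ) / sin( π/(3−α) ). -/
open Real Set

lemma aux_int {p c : ℝ} (hp : 1 < p) (hc : 0 < c) :
    MeasureTheory.IntegrableOn (fun u : ℝ => (u ^ p + c)⁻¹) (Ioi 0) := by
  have hm : Measurable (fun u : ℝ => (u ^ p + c)⁻¹) := by fun_prop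
  rw [← Ioc_union_Ioi_eq_Ioi (zero_le_one (α := ℝ))]
  refine MeasureTheory.IntegrableOn.union ?_ ?_
  · refine MeasureTheory.Measure.integrableOn_of_bounded (M := c⁻¹) (by simp)
      hm.aestronglyMeasurable ?_
    refine (MeasureTheory.ae_restrict_mem measurableSet_Ioc).mono fun u hu => ?_
    have h0 : 0 ≤ u ^ p := rpow_nonneg hu.1.le _
    rw [Real.norm_of_nonneg (by positivity)]
    exact inv_anti₀ hc (by linarith)
  · refine (integrableOn_Ioi_rpow_of_lt (a := -p) (by linarith) one_pos).mono'
      hm.aestronglyMeasurable ?_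
    refine (MeasureTheory.ae_restrict_mem measurableSet_Ioi).mono fun u hu => ?_
    have hu0 : (0:ℝ) < u := lt_trans one_pos hu
    have h0 : 0 < u ^ p := rpow_pos_of_pos hu0 _
    rw [Real.norm_of_nonneg (by positivity), rpow_neg hu0.le]
    exact inv_anti₀ h0 (by linarith)

lemma aux_real {p r : ℝ} (hp : 1 < p) (hr : 0 < r) :
    ∫ u in Ioi (0:ℝ), (u ^ p + r)⁻¹ = (π / p / sin (π / p)) * r ^ (1 / p - 1) := by
  have hp0 : 0 < p := by linarith
  have hI : ∀ u ∈ Ioi (0:ℝ), (∫ t in Ioi (0:ℝ), exp (-(u ^ p + r) * t)) = (u ^ p + r)⁻¹ := by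
    intro u hu
    have h0 : 0 < u ^ p := rpow_pos_of_pos hu _
    rw [integral_exp_mul_Ioi (by linarith)]
    rw [mul_zero, exp_zero, neg_div_neg_eq, one_div]
  rw [← MeasureTheory.setIntegral_congr_fun measurableSet_Ioi hI]
  rw [MeasureTheory.integral_integral_swap]
  · have hJ : ∀ t ∈ Ioi (0:ℝ), (∫ u in Ioi (0:ℝ), exp (-(u ^ p + r) * t))
        = Gamma (1 / p + 1) * (t ^ ((1 - 1 / p) - 1) * exp (-(r * t))) := by
      intro t ht
      have : ∀ u : ℝ, exp (-(u ^ p + r) * t) = exp (-(r * t)) * exp (-t * u ^ p) := by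
        intro u; rw [← exp_add]; ring_nf
      simp_rw [this]
      rw [MeasureTheory.integral_const_mul, integral_exp_neg_mul_rpow hp0 ht]
      rw [show (1 - 1 / p) - 1 = -1 / p by ring]
      ring
    rw [MeasureTheory.setIntegral_congr_fun measurableSet_Ioi hJ,
      MeasureTheory.integral_const_mul]
    have h1 : 1 / p < 1 := by rw [div_lt_one hp0]; exact hp
    rw [integral_rpow_mul_exp_neg_mul_Ioi (by linarith) hr,
      Gamma_add_one (by positivity)]
    have := Gamma_mul_Gamma_one_sub (1 / p)
    rw [one_div r, inv_rpow hr.le, ← rpow_neg hr.le, neg_sub]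
    calc _ = (1 / p) * (Gamma (1 / p) * Gamma (1 - 1 / p)) * r ^ (1 / p - 1) := by ring
      _ = _ := by rw [this]; ring_nf
  · rw [MeasureTheory.integrable_prod_iff]
    · constructor
      · refine (MeasureTheory.ae_restrict_mem measurableSet_Ioi).mono fun u hu => ?_
        have h0 : 0 < u ^ p := rpow_pos_of_pos hu _
        simp only [Function.uncurry]
        refine MeasureTheory.Integrable.of_integral_ne_zero ?_
        rw [hI u hu]
        positivity
      · refine (MeasureTheory.integrableOn_congr_fun ?_ measurableSet_Ioi).mpr (aux_int hp hr)
        intro u hu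
        simp only [Function.uncurry, norm_of_nonneg (exp_pos _).le]
        exact hI u hu
    · apply Measurable.aestronglyMeasurable
      unfold Function.uncurry
      fun_prop

lemma aux_lb {c : ℝ} {z : ℂ} (hz : c ≤ z.re) (hc : 0 < c) {x : ℝ} (hx : 0 ≤ x) :
    ‖((x : ℂ) + z)⁻¹‖ ≤ (x + c)⁻¹ := by
  rw [norm_inv]
  refine inv_anti₀ (by positivity) ?_
  refine le_trans ?_ (Complex.re_le_norm _)
  simp; linarith

lemma aux_meas (p : ℝ) (z : ℂ) : Measurable (fun u : ℝ => (((u ^ p : ℝ) : ℂ) + z)⁻¹) := by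
  have : Measurable (fun u : ℝ => ((u ^ p : ℝ) : ℂ)) :=
    Complex.measurable_ofReal.comp (by fun_prop)
  exact (this.add_const z).inv

lemma aux_intC {p : ℝ} (hp : 1 < p) {z : ℂ} (hz : 0 < z.re) :
    MeasureTheory.IntegrableOn (fun u : ℝ => (((u ^ p : ℝ) : ℂ) + z)⁻¹) (Ioi 0) := by
  refine (aux_int hp hz).mono' (aux_meas p z).aestronglyMeasurable ?_
  refine (MeasureTheory.ae_restrict_mem measurableSet_Ioi).mono fun u hu => ?_
  exact aux_lb le_rfl hz (rpow_nonneg (le_of_lt hu) _)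

lemma aux_diff {p : ℝ} (hp : 1 < p) {z : ℂ} (hz : 0 < z.re) :
    DifferentiableAt ℂ (fun z : ℂ => ∫ u in Ioi (0:ℝ), (((u ^ p : ℝ) : ℂ) + z)⁻¹) z := by
  set c := z.re / 2 with hcdef
  have hc : 0 < c := by positivity
  have hball : ∀ w ∈ Metric.ball z c, c ≤ w.re := by
    intro w hw
    have h1 : |(w - z).re| ≤ ‖w - z‖ := Complex.abs_re_le_norm _
    rw [Metric.mem_ball, dist_eq_norm] at hw
    rw [Complex.sub_re] at h1
    have := (abs_lt.mp (lt_of_le_of_lt h1 hw)).1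
    linarith
  have := hasDerivAt_integral_of_dominated_loc_of_deriv_le (μ := MeasureTheory.volume.restrict (Ioi (0:ℝ)))
    (F := fun (z : ℂ) (u : ℝ) => (((u ^ p : ℝ) : ℂ) + z)⁻¹)
    (F' := fun (z : ℂ) (u : ℝ) => -((((u ^ p : ℝ) : ℂ) + z)⁻¹ * (((u ^ p : ℝ) : ℂ) + z)⁻¹))
    (x₀ := z) (s := Metric.ball z c) (bound := fun u => c⁻¹ * (u ^ p + c)⁻¹)
    (Metric.ball_mem_nhds z hc)
    (Filter.Eventually.of_forall fun w => (aux_meas p w).aestronglyMeasurable)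
    (aux_intC hp hz)
    ((aux_meas p z).mul (aux_meas p z)).neg.aestronglyMeasurable
    ?_ ((aux_int hp hc).const_mul _) ?_
  · exact this.2.differentiableAt
  · refine (MeasureTheory.ae_restrict_mem measurableSet_Ioi).mono fun u hu w hw => ?_
    have h0 : 0 < u ^ p := rpow_pos_of_pos hu _
    have h := aux_lb (hball w hw) hc h0.le
    rw [norm_neg, norm_mul]
    refine mul_le_mul (h.trans (inv_anti₀ hc (by linarith))) h (norm_nonneg _) (by positivity)
  · refine (MeasureTheory.ae_restrict_mem measurableSet_Ioi).mono fun u hu w hw => ?_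
    have h0 : 0 < u ^ p := rpow_pos_of_pos hu _
    have hne : (((u ^ p : ℝ) : ℂ) + w) ≠ 0 := by
      intro h
      have := congrArg Complex.re h
      simp at this
      linarith [hball w hw]
    have h1 : HasDerivAt (fun w : ℂ => ((u ^ p : ℝ) : ℂ) + w) 1 w := (hasDerivAt_id w).const_add _
    refine (h1.inv hne).congr_deriv ?_
    rw [neg_div, one_div, sq, mul_inv]

lemma aux_cplx {p : ℝ} (hp : 1 < p) {z : ℂ} (hz : 0 < z.re) :
    ∫ u in Ioi (0:ℝ), (((u ^ p : ℝ) : ℂ) + z)⁻¹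
      = ((π / p / sin (π / p) : ℝ) : ℂ) * z ^ (((1 / p - 1 : ℝ)) : ℂ) := by
  set U : Set ℂ := {z | 0 < z.re} with hU
  have hUo : IsOpen U := isOpen_lt continuous_const Complex.continuous_re
  have hUc : IsPreconnected U := (convex_halfSpace_re_gt 0).isPreconnected
  have hf : AnalyticOnNhd ℂ (fun z : ℂ => ∫ u in Ioi (0:ℝ), (((u ^ p : ℝ) : ℂ) + z)⁻¹) U :=
    DifferentiableOn.analyticOnNhd (fun w hw => (aux_diff hp hw).differentiableWithinAt) hUo
  have hg : AnalyticOnNhd ℂ (fun z : ℂ => ((π / p / sin (π / p) : ℝ) : ℂ) * z ^ (((1 / p - 1 : ℝ)) : ℂ)) U := by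
    refine DifferentiableOn.analyticOnNhd (fun w hw => ?_) hUo
    refine DifferentiableAt.differentiableWithinAt ?_
    refine DifferentiableAt.const_mul ?_ _
    exact (differentiableAt_id).cpow_const (Or.inl hw)
  have hreal : ∀ r : ℝ, 0 < r → ∫ u in Ioi (0:ℝ), (((u ^ p : ℝ) : ℂ) + (r:ℂ))⁻¹
      = ((π / p / sin (π / p) : ℝ) : ℂ) * (r:ℂ) ^ (((1 / p - 1 : ℝ)) : ℂ) := by
    intro r hr
    rw [← Complex.ofReal_cpow hr.le, ← Complex.ofReal_mul, ← aux_real hp hr]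
    refine Eq.trans ?_ integral_ofReal
    congr 1
    ext u
    simp
  refine hf.eqOn_of_preconnected_of_frequently_eq hg hUc (z₀ := 1) (by simp [hU]) ?_ hz
  have ht : Filter.Tendsto (fun r : ℝ => (r : ℂ)) (nhdsWithin 1 {1}ᶜ) (nhdsWithin 1 {1}ᶜ) := by
    refine tendsto_nhdsWithin_of_tendsto_nhds_of_eventually_within _ ?_ ?_
    · have := (Complex.continuous_ofReal.tendsto (1:ℝ))
      rw [Complex.ofReal_one] at this
      exact this.mono_left nhdsWithin_le_nhds
    · filter_upwards [self_mem_nhdsWithin] with r hr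
      simpa using hr
  refine ht.frequently ?_
  refine Filter.Eventually.frequently ?_
  filter_upwards [nhdsWithin_le_nhds (lt_mem_nhds (one_pos : (0:ℝ) < 1))] with r hr
  exact hreal r hr

lemma aux_main {p φ : ℝ} (hp : 1 < p) (h0 : 0 < φ) (h1 : φ < π / 2) :
    ∫ u in Ioi (0:ℝ), arctan (sin φ / (u ^ p + cos φ)) = π * (sin (φ / p) / sin (π / p)) := by
  have hp0 : 0 < p := by linarith
  have hs : 0 < sin φ := sin_pos_of_pos_of_lt_pi h0 (by linarith [pi_pos])
  have hc : 0 < cos φ := cos_pos_of_mem_Ioo ⟨by linarith, h1⟩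
  have hcs := sin_sq_add_cos_sq φ
  set z : ℂ := Complex.exp (φ * Complex.I) with hz
  have hzre : z.re = cos φ := Complex.exp_ofReal_mul_I_re φ
  have hzim : z.im = sin φ := Complex.exp_ofReal_mul_I_im φ
  have hzpos : 0 < z.re := hzre ▸ hc
  -- integrand after integration by parts
  have hIm : ∀ u ∈ Ioi (0:ℝ), u * (-(sin φ * (p * u ^ (p - 1))) / ((u ^ p + cos φ) ^ 2 + sin φ ^ 2))
      = -p * (z * (((u ^ p : ℝ) : ℂ) + z)⁻¹).im := by
    intro u hu
    have hx : 0 < u ^ p := rpow_pos_of_pos hu _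
    have hux : u ^ p = u * u ^ (p - 1) := by
      rw [rpow_sub_one (ne_of_gt hu)]
      have : u ≠ 0 := ne_of_gt hu
      field_simp
    have hpos : 0 < (u ^ p + cos φ) ^ 2 + sin φ ^ 2 := by positivity
    rw [Complex.mul_im, Complex.inv_re, Complex.inv_im, Complex.normSq_apply]
    simp only [Complex.add_re, Complex.add_im, Complex.ofReal_re, Complex.ofReal_im, hzre, hzim,
      zero_add]
    rw [show (u ^ p + cos φ) * (u ^ p + cos φ) + sin φ * sin φ
      = (u ^ p + cos φ) ^ 2 + sin φ ^ 2 by ring]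
    have e : u * (-(sin φ * (p * u ^ (p - 1)))) = -(sin φ * p * u ^ p) := by rw [hux]; ring
    rw [← mul_div_assoc, e]
    field_simp
    ring
  have hθle : ∀ u ∈ Ioi (0:ℝ), |arctan (sin φ / (u ^ p + cos φ))| ≤ sin φ * (u ^ p + cos φ)⁻¹ := by
    intro u hu
    have hx : 0 < u ^ p := rpow_pos_of_pos hu _
    have hq : 0 < sin φ / (u ^ p + cos φ) := by positivity
    rw [abs_of_nonneg (arctan_nonneg.mpr hq.le), ← div_eq_mul_inv]
    have := le_tan (arctan_nonneg.mpr hq.le) (arctan_lt_pi_div_two _)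
    rwa [tan_arctan] at this
  have hθint : MeasureTheory.IntegrableOn
      (fun u : ℝ => arctan (sin φ / (u ^ p + cos φ))) (Ioi 0) := by
    refine ((aux_int hp hc).const_mul (sin φ)).mono' ?_ ?_
    · apply Measurable.aestronglyMeasurable
      exact measurable_arctan.comp (by fun_prop)
    · exact (MeasureTheory.ae_restrict_mem measurableSet_Ioi).mono fun u hu => hθle u hu
  have hCint := (aux_intC hp hzpos).const_mul z
  have hD : ∀ u ∈ Ioi (0:ℝ), HasDerivAt (fun u : ℝ => arctan (sin φ / (u ^ p + cos φ)))
      (-(sin φ * (p * u ^ (p - 1))) / ((u ^ p + cos φ) ^ 2 + sin φ ^ 2)) u := by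
    intro u hu
    have hx : 0 < u ^ p := rpow_pos_of_pos hu _
    have hd : HasDerivAt (fun u : ℝ => u ^ p + cos φ) (p * u ^ (p - 1)) u :=
      (hasDerivAt_rpow_const (Or.inl (ne_of_gt hu))).add_const _
    have hne : u ^ p + cos φ ≠ 0 := by positivity
    have hpos : (u ^ p + cos φ) ^ 2 + sin φ ^ 2 ≠ 0 := by positivity
    have h3 : 1 + (sin φ / (u ^ p + cos φ)) ^ 2 ≠ 0 := by positivity
    refine ((hasDerivAt_const u (sin φ)).div hd hne).arctan.congr_deriv ?_
    simp only [Pi.div_apply]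
    field_simp
    ring
  have hlim0 : Filter.Tendsto ((fun u : ℝ => u) * fun u : ℝ => arctan (sin φ / (u ^ p + cos φ)))
      (nhdsWithin 0 (Ioi 0)) (nhds 0) := by
    have hb : Filter.Tendsto (fun u : ℝ => |u| * (π / 2)) (nhdsWithin 0 (Ioi 0)) (nhds 0) := by
      have : Continuous (fun u : ℝ => |u| * (π / 2)) := by fun_prop
      have h := this.tendsto 0
      simp only [abs_zero, zero_mul] at h
      exact h.mono_left nhdsWithin_le_nhds
    refine squeeze_zero_norm (fun u => ?_) hb
    simp only [Pi.mul_apply, norm_mul, Real.norm_eq_abs]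
    refine mul_le_mul_of_nonneg_left ?_ (abs_nonneg _)
    exact abs_le.mpr ⟨(neg_pi_div_two_lt_arctan _).le, (arctan_lt_pi_div_two _).le⟩
  have hlimI : Filter.Tendsto ((fun u : ℝ => u) * fun u : ℝ => arctan (sin φ / (u ^ p + cos φ)))
      Filter.atTop (nhds 0) := by
    have hb : Filter.Tendsto (fun u : ℝ => sin φ * u ^ (-(p - 1))) Filter.atTop (nhds 0) := by
      simpa using (tendsto_rpow_neg_atTop (y := p - 1) (by linarith)).const_mul (sin φ)
    refine squeeze_zero_norm' ?_ hb
    filter_upwards [Filter.eventually_gt_atTop 0] with u hu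
    have hx : 0 < u ^ p := rpow_pos_of_pos hu _
    simp only [Pi.mul_apply, norm_mul, Real.norm_eq_abs, abs_of_pos hu]
    calc u * |arctan (sin φ / (u ^ p + cos φ))| ≤ u * (sin φ * (u ^ p)⁻¹) := by
          refine mul_le_mul_of_nonneg_left ((hθle u hu).trans ?_) hu.le
          refine mul_le_mul_of_nonneg_left (inv_anti₀ hx (by linarith)) hs.le
      _ = sin φ * u ^ (-(p - 1)) := by
          rw [neg_sub, rpow_sub hu, rpow_one]
          ring
  have hIBP := MeasureTheory.integral_Ioi_mul_deriv_eq_deriv_mul (a := (0:ℝ))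
    (u := fun u : ℝ => u) (u' := fun _ => 1)
    (v := fun u : ℝ => arctan (sin φ / (u ^ p + cos φ)))
    (v' := fun u : ℝ => -(sin φ * (p * u ^ (p - 1))) / ((u ^ p + cos φ) ^ 2 + sin φ ^ 2))
    (a' := 0) (b' := 0)
    (fun u _ => hasDerivAt_id u) hD
    ((MeasureTheory.integrableOn_congr_fun hIm measurableSet_Ioi).mpr (hCint.im.const_mul (-p)))
    (by simpa [Pi.mul_def] using hθint) hlim0 hlimI
  simp only [one_mul, sub_zero, zero_sub] at hIBP
  rw [MeasureTheory.setIntegral_congr_fun measurableSet_Ioi hIm,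
    MeasureTheory.integral_const_mul] at hIBP
  have him : ∫ u in Ioi (0:ℝ), (z * (((u ^ p : ℝ) : ℂ) + z)⁻¹).im
      = (∫ u in Ioi (0:ℝ), z * (((u ^ p : ℝ) : ℂ) + z)⁻¹).im := integral_im hCint
  rw [him, MeasureTheory.integral_const_mul, aux_cplx hp hzpos] at hIBP
  have hpow : z * (((π / p / sin (π / p) : ℝ) : ℂ) * z ^ (((1 / p - 1 : ℝ)) : ℂ))
      = ((π / p / sin (π / p) : ℝ) : ℂ) * Complex.exp ((φ / p : ℝ) * Complex.I) := by
    have hlog : Complex.log z = φ * Complex.I := by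
      rw [hz, Complex.log_exp] <;> simp <;> linarith [pi_pos]
    have hz0 : z ≠ 0 := Complex.exp_ne_zero _
    rw [Complex.cpow_def_of_ne_zero hz0, hlog, mul_left_comm, hz, ← Complex.exp_add]
    congr 2
    push_cast
    ring
  rw [hpow, Complex.im_ofReal_mul, Complex.exp_ofReal_mul_I_im] at hIBP
  have hfin : p * (π / p / sin (π / p) * sin (φ / p)) = π * (sin (φ / p) / sin (π / p)) := by
    field_simp
  linarith

theorem integral_theta0_eq_bAlpha
    (α : ℝ) (hα : α ∈ Set.Ioo (0:ℝ) 1) :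
    (1 / π) * (∫ u in Set.Ioi (0:ℝ),
        Real.arctan (Real.sin ((1 - α) * π / 2)
          / (u ^ (3 - α) + Real.cos ((1 - α) * π / 2))))
      = Real.sin ((π / (3 - α)) * ((1 - α) / 2)) / Real.sin (π / (3 - α)) := by
  obtain ⟨h0, h1⟩ := hα
  have hpi := pi_pos
  rw [aux_main (by linarith) (by nlinarith) (by nlinarith), ← mul_assoc,
    one_div_mul_cancel hpi.ne', one_mul]
  congr 2
  ring
end

section
/- Let α ∈ (0,1), β ∈ ℝ, c_α = (1−α/2)(1−α), and K(x,y) = c_α·∫₀ˣ∫₀ʸ e^{β(x−u)} e^{β(y−v)} |u−v|^{−α} dv du. Suppose λ > 0 and φ : [0,1] → ℝ is continuously differentiable with ∫₀¹ K(x,y)φ(y) dy = λ·φ(x) on [0,1]. Let ψ(x) = e^{−βx}·∫ₓ¹ e^{βr} φ(r) dr, u(x,t) = ∫₀¹ ψ(y)·e^{−t|x−y|} dy for t > 0, Φ₀(z) = −(Γ(α)λ/c_α)·(β−z)·ψ(0) + ∫₀^∞ (t^{α−1}/(t−z))·u(0,t) dt and Φ₁(z) = −(Γ(α)λ/c_α)·ψ'(1)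 + ∫₀^∞ (t^{α−1}/(t−z))·u(1,t) dt for z ∈ ℂ∖[0,∞), and Λ(z) = (Γ(α)λ/c_α)(z²−β²) + ∫₀^∞ 2t^α/(t²−z²) dt for z ∈ ℂ∖ℝ. Then the Laplace transform φ̂(z) = ∫₀¹ e^{−zx} φ(x) dx satisfies, for every z ∈ ℂ∖ℝ with Λ(z) ≠ 0: φ̂(z) = φ̂(−β) − ((z+β)/Λ(z))·( Φ₀(z) + e^{−z}·Φ₁(−z) ). -/
open Real Complex Set intervalIntegral

/-- The fOU covariance kernel for `H = 1 − α/2 > 1/2`,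
`K(x,y) = c_α ∫₀ˣ∫₀ʸ e^{β(x−u)} e^{β(y−v)} |u−v|^{−α} dv du`, `c_α = (1−α/2)(1−α)`. -/
noncomputable def fOUkernelHigh (α β : ℝ) (x y : ℝ) : ℝ :=
  (1 - α / 2) * (1 - α) *
    ∫ u in (0:ℝ)..x, ∫ v in (0:ℝ)..y,
      Real.exp (β * (x - u)) * Real.exp (β * (y - v)) * |u - v| ^ (-α)

/-- `Λ(z) = (Γ(α)λ/c_α)(z²−β²) + ∫₀^∞ 2t^α/(t²−z²) dt`. -/
noncomputable def LambdaFn (α β lam : ℝ) (z : ℂ) : ℂ :=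
  ((Real.Gamma α * lam / ((1 - α / 2) * (1 - α)) : ℝ) : ℂ) * (z ^ 2 - (β : ℂ) ^ 2) +
    ∫ t in Set.Ioi (0:ℝ), 2 * ((t : ℂ) ^ (α : ℂ)) / ((t : ℂ) ^ 2 - z ^ 2)

namespace FOU
open MeasureTheory

lemma ite_le_integral {E : Type*} [NormedAddCommGroup E] [NormedSpace ℝ E] (f : ℝ → E)
    {y : ℝ} (hy : y ∈ Icc (0:ℝ) 1) :
    ∫ v in Ioc (0:ℝ) 1, (if v ≤ y then f v else 0) = ∫ v in (0:ℝ)..y, f v := by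
  rw [intervalIntegral.integral_of_le hy.1]
  have h : (fun v => if v ≤ y then f v else 0) = (Iic y).indicator f := by
    ext v; simp [Set.indicator]
  rw [h, MeasureTheory.setIntegral_indicator measurableSet_Iic]
  congr 2
  ext v; simp only [mem_inter_iff, mem_Ioc, mem_Iic]
  have := hy.2
  constructor
  · rintro ⟨⟨a, b⟩, c⟩; exact ⟨a, c⟩
  · rintro ⟨a, c⟩; exact ⟨⟨a, c.trans this⟩, c⟩

lemma ite_ge_integral {E : Type*} [NormedAddCommGroup E] [NormedSpace ℝ E] (f : ℝ → E)
    {u : ℝ} (hu : u ∈ Ioc (0:ℝ) 1) :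
    ∫ x in Ioc (0:ℝ) 1, (if u ≤ x then f x else 0) = ∫ x in u..(1:ℝ), f x := by
  rw [intervalIntegral.integral_of_le hu.2, ← integral_Icc_eq_integral_Ioc]
  have h : (fun x => if u ≤ x then f x else 0) = (Ici u).indicator f := by
    ext v; simp [Set.indicator]
  rw [h, MeasureTheory.setIntegral_indicator measurableSet_Ici,
    ← integral_Icc_eq_integral_Ioc (x := u)]
  congr 2
  ext v; simp only [mem_inter_iff, mem_Ioc, mem_Ici, mem_Icc]
  have := hu.1
  constructor
  · rintro ⟨⟨a, b⟩, c⟩; exact ⟨c, b⟩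
  · rintro ⟨a, c⟩; exact ⟨⟨by linarith, c⟩, a⟩

lemma int_exp (w : ℂ) (a b : ℝ) :
    w * ∫ x in a..b, Complex.exp (-(w * x)) = Complex.exp (-(w * a)) - Complex.exp (-(w * b)) := by
  by_cases hw : w = 0
  · simp [hw]
  have := @integral_exp_mul_complex a b (-w) (neg_ne_zero.mpr hw)
  simp only [neg_mul] at this
  rw [this]
  field_simp
  ring

lemma tri (k : ℝ → ℂ) (hk : IntegrableOn k (Ioc 0 1)) (w : ℂ) :
    w * ∫ x in (0:ℝ)..1, Complex.exp (-(w * x)) * ∫ u in (0:ℝ)..x, k u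
      = ∫ u in (0:ℝ)..1, k u * (Complex.exp (-(w * u)) - Complex.exp (-w)) := by
  have hc : Continuous (fun x : ℝ => Complex.exp (-(w * x))) := by fun_prop
  have hci : IntegrableOn (fun x : ℝ => Complex.exp (-(w * x))) (Ioc 0 1) :=
    (hc.integrableOn_Icc).mono_set Ioc_subset_Icc_self
  have hI : Integrable (Function.uncurry fun x u : ℝ =>
      if u ≤ x then Complex.exp (-(w * x)) * k u else 0)
      ((volume.restrict (Ioc (0:ℝ) 1)).prod (volume.restrict (Ioc (0:ℝ) 1))) := by
    have h1 := (Integrable.mul_prod hci hk).indicator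
      (measurableSet_le measurable_snd measurable_fst : MeasurableSet {p : ℝ × ℝ | p.2 ≤ p.1})
    refine h1.congr (ae_of_all _ ?_)
    rintro ⟨x, u⟩; simp [Set.indicator]
  have h2 : ∫ x in (0:ℝ)..1, Complex.exp (-(w * x)) * ∫ u in (0:ℝ)..x, k u
      = ∫ x in Ioc (0:ℝ) 1, ∫ u in Ioc (0:ℝ) 1,
        if u ≤ x then Complex.exp (-(w * x)) * k u else 0 := by
    rw [intervalIntegral.integral_of_le zero_le_one]
    refine setIntegral_congr_fun measurableSet_Ioc fun x hx => ?_
    beta_reduce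
    rw [ite_le_integral (fun u => Complex.exp (-(w * x)) * k u) ⟨hx.1.le, hx.2⟩,
      intervalIntegral.integral_const_mul]
  rw [h2, integral_integral_swap hI, ← MeasureTheory.integral_const_mul,
    intervalIntegral.integral_of_le zero_le_one]
  refine setIntegral_congr_fun measurableSet_Ioc fun u hu => ?_
  beta_reduce
  rw [ite_ge_integral (fun x : ℝ => Complex.exp (-(w * x)) * k u) hu,
      intervalIntegral.integral_mul_const, ← mul_assoc, int_exp]
  push_cast
  ring_nf

/-- the kernel is integrable on the square -/
lemma ker_int {α : ℝ} (hα : α ∈ Set.Ioo (0:ℝ) 1) :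
    Integrable (fun p : ℝ × ℝ => |p.1 - p.2| ^ (-α))
      ((volume.restrict (Ioc (0:ℝ) 1)).prod (volume.restrict (Ioc (0:ℝ) 1))) := by
  have hk : IntegrableOn (fun s : ℝ => |s| ^ (-α)) (Icc (-1) 1) := by
    have h1 : IntegrableOn (fun s : ℝ => |s| ^ (-α)) (Icc 0 1) := by
      have := (intervalIntegrable_rpow' (a := 0) (b := 1) (r := -α) (by linarith [hα.2]))
      rw [intervalIntegrable_iff_integrableOn_Icc_of_le zero_le_one] at this
      exact this.congr_fun (fun x hx => by simp only; rw [abs_of_nonneg hx.1]) measurableSet_Icc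
    have h2 : IntegrableOn (fun s : ℝ => |s| ^ (-α)) (Icc (-1) 0) := by
      have := h1.comp_neg
      simpa using this
    have := h2.union h1
    rwa [Icc_union_Icc_eq_Icc (by norm_num) (by norm_num)] at this
  have hk' : Integrable ((Icc (-1:ℝ) 1).indicator (fun s : ℝ => |s| ^ (-α))) :=
    hk.integrable_indicator measurableSet_Icc
  have h1 : Integrable (fun _ : ℝ => (1:ℝ)) (volume.restrict (Ioc (0:ℝ) 1)) := integrable_const _
  have h3 := Integrable.convolution_integrand (ContinuousLinearMap.mul ℝ ℝ) h1 hk'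
  have h4 : Integrable (fun p : ℝ × ℝ => (Icc (-1:ℝ) 1).indicator (fun s : ℝ => |s| ^ (-α)) (p.1 - p.2))
      ((volume.restrict (Ioc (0:ℝ) 1)).prod (volume.restrict (Ioc (0:ℝ) 1))) := by
    have := h3.mono_measure (Measure.prod_mono (Measure.restrict_le_self (μ := volume) (s := Ioc (0:ℝ) 1)) le_rfl)
    simpa using this
  refine h4.congr ?_
  rw [Measure.prod_restrict]
  filter_upwards [ae_restrict_mem (measurableSet_Ioc.prod measurableSet_Ioc)] with p hp
  obtain ⟨⟨a, b⟩, c, d⟩ := hp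
  rw [Set.indicator_of_mem]
  constructor <;> linarith

/-- diagonal is null -/
lemma ne_ae : ∀ᵐ p : ℝ × ℝ ∂((volume.restrict (Ioc (0:ℝ) 1)).prod (volume.restrict (Ioc (0:ℝ) 1))),
    p.1 ≠ p.2 := by
  rw [Measure.ae_prod_iff_ae_ae]
  · filter_upwards with x
    have : ∀ᵐ y : ℝ ∂(volume.restrict (Ioc (0:ℝ) 1)), y ≠ x := by
      rw [ae_iff]; simp
    filter_upwards [this] with y hy
    exact fun h => hy h.symm
  · exact (measurableSet_eq_fun measurable_fst measurable_snd).compl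

lemma gam_int {α s : ℝ} (hα : 0 < α) (hs : 0 < s) :
    IntegrableOn (fun t : ℝ => t ^ (α - 1) * Real.exp (-(t * s))) (Ioi 0) := by
  have := integrableOn_rpow_mul_exp_neg_mul_rpow (s := α - 1) (p := 1) (b := s)
    (by linarith) one_pos hs
  simpa [mul_comm s] using this

lemma gam_eq {α s : ℝ} (hα : 0 < α) (hs : 0 < s) :
    ∫ t in Ioi (0:ℝ), t ^ (α - 1) * Real.exp (-(t * s)) = Real.Gamma α * s ^ (-α) := by
  have := Real.integral_rpow_mul_exp_neg_mul_Ioi hα hs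
  simp only [mul_comm s] at this
  rw [this, one_div, Real.inv_rpow hs.le, Real.rpow_neg hs.le, mul_comm]

/-- integrability in `t` -/
lemma t_int {α : ℝ} (hα : α ∈ Set.Ioo (0:ℝ) 1) {w : ℂ} (hw : w.im ≠ 0) :
    IntegrableOn (fun t : ℝ => ((t ^ (α - 1) : ℝ) : ℂ) / ((t : ℂ) - w)) (Ioi 0) := by
  have hm : 0 < |w.im| := abs_pos.mpr hw
  have him : ∀ t : ℝ, |w.im| ≤ ‖(t:ℂ) - w‖ := fun t => by
    have := Complex.abs_im_le_norm ((t:ℂ) - w)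
    simpa using this
  have hmeas : Measurable (fun t : ℝ => ((t ^ (α - 1) : ℝ) : ℂ) / ((t : ℂ) - w)) := by
    fun_prop
  have hne : ∀ t : ℝ, (t:ℂ) - w ≠ 0 := fun t h => by
    have := him t; rw [h, norm_zero] at this; linarith
  set C := (1 + ‖w‖) / |w.im| + 1 with hC
  have hCpos : 0 < C := by positivity
  have hb : ∀ t : ℝ, 0 < t → 1 + t ≤ C * ‖(t:ℂ) - w‖ := fun t ht => by
    have h1 : t ≤ ‖w‖ + ‖(t:ℂ) - w‖ := by
      have := norm_add_le w ((t:ℂ) - w)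
      have e : w + ((t:ℂ) - w) = t := by ring
      rw [e, Complex.norm_real, Real.norm_of_nonneg ht.le] at this
      exact this
    have h2 : 1 + ‖w‖ ≤ (1 + ‖w‖) / |w.im| * ‖(t:ℂ) - w‖ := by
      rw [div_mul_eq_mul_div, le_div_iff₀ hm]
      exact mul_le_mul_of_nonneg_left (him t) (by positivity)
    rw [hC]; linarith
  have hn : ∀ t : ℝ, 0 < t → ‖((t ^ (α - 1) : ℝ) : ℂ) / ((t : ℂ) - w)‖ ≤ C * (t ^ (α - 1) / (1 + t)) := by
    intro t ht
    have hp : 0 < t ^ (α - 1) := Real.rpow_pos_of_pos ht _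
    rw [norm_div, Complex.norm_real, Real.norm_of_nonneg hp.le, mul_div_assoc', div_le_div_iff₀
      (norm_pos_iff.mpr (hne t)) (by linarith)]
    have := mul_le_mul_of_nonneg_left (hb t ht) hp.le
    linarith
  have h1 : IntegrableOn (fun t : ℝ => ((t ^ (α - 1) : ℝ) : ℂ) / ((t : ℂ) - w)) (Ioc 0 1) := by
    have := (intervalIntegrable_rpow' (a := 0) (b := 1) (r := α - 1) (by linarith [hα.1]))
    rw [intervalIntegrable_iff_integrableOn_Ioc_of_le zero_le_one] at this
    refine (this.const_mul C).mono' hmeas.aestronglyMeasurable ?_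
    filter_upwards [ae_restrict_mem measurableSet_Ioc] with t ht
    refine (hn t ht.1).trans (mul_le_mul_of_nonneg_left ?_ hCpos.le)
    exact div_le_self (Real.rpow_nonneg ht.1.le _) (by linarith [ht.1])
  have h2 : IntegrableOn (fun t : ℝ => ((t ^ (α - 1) : ℝ) : ℂ) / ((t : ℂ) - w)) (Ioi 1) := by
    have := integrableOn_Ioi_rpow_of_lt (a := α - 2) (c := 1) (by linarith [hα.2]) one_pos
    refine (this.const_mul C).mono' hmeas.aestronglyMeasurable ?_
    filter_upwards [ae_restrict_mem measurableSet_Ioi] with t ht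
    have ht0 : (0:ℝ) < t := lt_trans one_pos ht
    refine (hn t ht0).trans (mul_le_mul_of_nonneg_left ?_ hCpos.le)
    have e : t ^ (α - 2) = t ^ (α - 1) / t := by
      rw [← Real.rpow_sub_one ht0.ne']; congr 1; ring
    rw [e]
    exact div_le_div_of_nonneg_left (Real.rpow_nonneg ht0.le _) ht0 (by linarith)
  have := h1.union h2
  rwa [Ioc_union_Ioi_eq_Ioi zero_le_one] at this

end FOU
namespace FOU
open MeasureTheory

lemma ker_mul_int {𝕜 : Type*} [RCLike 𝕜] {α : ℝ} (hα : α ∈ Set.Ioo (0:ℝ) 1)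
    {f : ℝ × ℝ → 𝕜} (hf : Continuous f) :
    Integrable (fun p : ℝ × ℝ => f p * ((|p.1 - p.2| ^ (-α) : ℝ) : 𝕜))
      ((volume.restrict (Ioc (0:ℝ) 1)).prod (volume.restrict (Ioc (0:ℝ) 1))) := by
  obtain ⟨C, hC⟩ := (isCompact_Icc.prod isCompact_Icc :
    IsCompact (Icc (0:ℝ) 1 ×ˢ Icc (0:ℝ) 1)).exists_bound_of_continuousOn hf.continuousOn
  refine Integrable.bdd_mul (c := C) (ker_int hα).ofReal hf.aestronglyMeasurable ?_
  rw [Measure.prod_restrict]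
  filter_upwards [ae_restrict_mem (measurableSet_Ioc.prod measurableSet_Ioc)] with p hp
  exact hC p ⟨Ioc_subset_Icc_self hp.1, Ioc_subset_Icc_self hp.2⟩

lemma kerA {α β : ℝ} (hα : α ∈ Set.Ioo (0:ℝ) 1) {φ : ℝ → ℝ} (hφ : Continuous φ) {ψ : ℝ → ℝ}
    (hψ : ∀ x : ℝ, ψ x = Real.exp (-(β * x)) * ∫ r in x..(1:ℝ), Real.exp (β * r) * φ r)
    {x : ℝ} (hx : x ∈ Icc (0:ℝ) 1) :
    (∫ y in (0:ℝ)..1, fOUkernelHigh α β x y * φ y) = (1 - α / 2) * (1 - α) *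
      (Real.exp (β * x) * ∫ u in (0:ℝ)..x, Real.exp (-(β * u)) *
        ∫ v in (0:ℝ)..1, ψ v * |u - v| ^ (-α)) := by
  set J := volume.restrict (Ioc (0:ℝ) 1) with hJ
  set ν := volume.restrict (Ioc (0:ℝ) x) with hν
  have hνJ : ν ≤ J := Measure.restrict_mono (Ioc_subset_Ioc_right hx.2) le_rfl
  have hk : Integrable (fun p : ℝ × ℝ => Real.exp (-(β * p.1)) * Real.exp (-(β * p.2))
      * |p.1 - p.2| ^ (-α)) (ν.prod J) := by
    have := ker_mul_int (𝕜 := ℝ) hα (f := fun p : ℝ × ℝ =>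
      Real.exp (-(β * p.1)) * Real.exp (-(β * p.2))) (by fun_prop)
    exact this.mono_measure (Measure.prod_mono hνJ le_rfl)
  have hφi : Integrable (fun y => φ y * Real.exp (β * y)) J :=
    ((by fun_prop : Continuous (fun y => φ y * Real.exp (β * y))).integrableOn_Icc).mono_set
      Ioc_subset_Icc_self
  have hF : Integrable (Function.uncurry fun (y : ℝ) (p : ℝ × ℝ) => if p.2 ≤ y then
      (φ y * Real.exp (β * y)) * (Real.exp (-(β * p.1)) * Real.exp (-(β * p.2))
      * |p.1 - p.2| ^ (-α)) else 0) (J.prod (ν.prod J)) := by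
    have h1 := (Integrable.mul_prod hφi hk).indicator
      (measurableSet_le (measurable_snd.comp measurable_snd) measurable_fst :
        MeasurableSet {p : ℝ × ℝ × ℝ | p.2.2 ≤ p.1})
    refine h1.congr (ae_of_all _ ?_)
    rintro ⟨x, u⟩; simp [Set.indicator]
  have hL : (∫ y in (0:ℝ)..1, fOUkernelHigh α β x y * φ y) = (1 - α / 2) * (1 - α) *
      (Real.exp (β * x) * ∫ y, ∫ p, (if p.2 ≤ y then
      (φ y * Real.exp (β * y)) * (Real.exp (-(β * p.1)) * Real.exp (-(β * p.2))
      * |p.1 - p.2| ^ (-α)) else 0) ∂(ν.prod J) ∂J) := by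
    rw [intervalIntegral.integral_of_le zero_le_one, ← mul_assoc, ← MeasureTheory.integral_const_mul]
    refine setIntegral_congr_fun measurableSet_Ioc fun y hy => ?_
    beta_reduce
    rw [integral_prod]
    · unfold fOUkernelHigh
      rw [intervalIntegral.integral_of_le hx.1, mul_assoc ((1 - α / 2) * (1 - α)),
        mul_assoc ((1 - α / 2) * (1 - α))]
      congr 1
      rw [mul_comm _ (φ y), ← MeasureTheory.integral_const_mul, ← MeasureTheory.integral_const_mul]
      refine integral_congr_ae (ae_of_all _ fun u => ?_)
      beta_reduce
      rw [ite_le_integral (fun v => (φ y * Real.exp (β * y)) * (Real.exp (-(β * u)) * Real.exp (-(β * v))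
        * |u - v| ^ (-α))) ⟨hy.1.le, hy.2⟩, ← intervalIntegral.integral_const_mul,
        ← intervalIntegral.integral_const_mul]
      refine intervalIntegral.integral_congr fun v _ => ?_
      beta_reduce
      rw [mul_sub, mul_sub, sub_eq_add_neg, sub_eq_add_neg, Real.exp_add, Real.exp_add]
      ring
    · refine ((hk.const_mul (φ y * Real.exp (β * y))).indicator
        (measurableSet_le measurable_snd measurable_const :
        MeasurableSet {p : ℝ × ℝ | p.2 ≤ y})).congr (ae_of_all _ ?_)
      rintro ⟨x, u⟩; simp [Set.indicator]
  have hFi := hF.integral_prod_right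
  simp only [Function.uncurry] at hFi
  rw [hL, integral_integral_swap hF, integral_prod _ hFi,
    intervalIntegral.integral_of_le hx.1]
  congr 2
  refine integral_congr_ae (ae_of_all _ fun u => ?_)
  beta_reduce
  rw [intervalIntegral.integral_of_le zero_le_one, ← MeasureTheory.integral_const_mul]
  refine setIntegral_congr_fun measurableSet_Ioc fun v hv => ?_
  simp only [Function.uncurry]
  rw [hJ, ite_ge_integral (fun y => (φ y * Real.exp (β * y)) * (Real.exp (-(β * u)) * Real.exp (-(β * v))
        * |u - v| ^ (-α))) hv, intervalIntegral.integral_mul_const, hψ]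
  simp only [mul_comm (φ _)]
  ring

lemma lapPsi {β : ℝ} {φ : ℝ → ℝ} (hφ : Continuous φ) {ψ : ℝ → ℝ}
    (hψ : ∀ x : ℝ, ψ x = Real.exp (-(β * x)) * ∫ r in x..(1:ℝ), Real.exp (β * r) * φ r) (z : ℂ) :
    (∫ x in (0:ℝ)..1, Complex.exp (-(z * x)) * (φ x : ℂ))
      = ψ 0 - (z + β) * ∫ x in (0:ℝ)..1, Complex.exp (-(z * x)) * (ψ x : ℂ) := by
  have hkc : Continuous (fun r : ℝ => ((Real.exp (β * r) * φ r : ℝ) : ℂ)) := by fun_prop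
  set k : ℝ → ℂ := fun r => ((Real.exp (β * r) * φ r : ℝ) : ℂ) with hk
  have h1 := tri k (hkc.integrableOn_Icc.mono_set Ioc_subset_Icc_self) (z + β)
  have h0 : (ψ 0 : ℂ) = ∫ u in (0:ℝ)..1, k u := by
    rw [hψ]; simp only [hk]; rw [intervalIntegral.integral_ofReal]; simp
  have h2 : ∀ x : ℝ, Complex.exp (-(z * x)) * (ψ x : ℂ) = Complex.exp (-((z + β) * x)) * (ψ 0 : ℂ)
      - Complex.exp (-((z + β) * x)) * ∫ u in (0:ℝ)..x, k u := by
    intro x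
    have : (∫ u in (0:ℝ)..x, k u) + ∫ u in x..(1:ℝ), k u = ψ 0 := by
      rw [h0]
      exact intervalIntegral.integral_add_adjacent_intervals (hkc.intervalIntegrable _ _)
        (hkc.intervalIntegrable _ _)
    rw [← this, hψ]
    have e : -((z + β) * x) = -(z * x) + ((-(β * x) : ℝ) : ℂ) := by push_cast; ring
    rw [e, Complex.exp_add, ← Complex.ofReal_exp]
    push_cast [hk, ← intervalIntegral.integral_ofReal]
    ring
  have hkk : Continuous (fun x : ℝ => ∫ u in (0:ℝ)..x, k u) :=
    intervalIntegral.continuous_primitive (fun _ _ => hkc.intervalIntegrable _ _) 0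
  simp only [h2]
  rw [intervalIntegral.integral_sub, mul_sub, h1, intervalIntegral.integral_mul_const,
    ← mul_assoc, int_exp]
  · simp only [mul_sub]
    rw [intervalIntegral.integral_sub, intervalIntegral.integral_mul_const, ← h0]
    · have : ∀ u : ℝ, k u * Complex.exp (-((z + β) * u)) = Complex.exp (-(z * u)) * (φ u : ℂ) := by
        intro u
        have e : -((z + β) * u) = -(z * u) + ((-(β * u) : ℝ) : ℂ) := by push_cast; ring
        rw [e, Complex.exp_add, ← Complex.ofReal_exp]
        have e2 : (Real.exp (β * u) : ℂ) * (Real.exp (-(β * u)) : ℂ) = 1 := by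
          rw [← Complex.ofReal_mul, ← Real.exp_add]; simp
        simp only [hk]; push_cast at e2 ⊢
        linear_combination (φ u : ℂ) * Complex.exp (-(z * u)) * e2
      simp only [this]
      simp
      ring
    · exact Continuous.intervalIntegrable (by fun_prop) _ _
    · exact Continuous.intervalIntegrable (by fun_prop) _ _
  · exact Continuous.intervalIntegrable (by fun_prop) _ _
  · exact Continuous.intervalIntegrable (by fun_prop) _ _

lemma lapG {α β lam : ℝ} (hα : α ∈ Set.Ioo (0:ℝ) 1) {φ : ℝ → ℝ} {ψ : ℝ → ℝ} (hψ : Continuous ψ)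
    (he : ∀ x ∈ Icc (0:ℝ) 1, lam * φ x = (1 - α / 2) * (1 - α) *
      (Real.exp (β * x) * ∫ u in (0:ℝ)..x, Real.exp (-(β * u)) *
        ∫ v in (0:ℝ)..1, ψ v * |u - v| ^ (-α))) (z : ℂ) :
    lam * ((z - β) * ∫ x in (0:ℝ)..1, Complex.exp (-(z * x)) * (φ x : ℂ))
      = (((1 - α / 2) * (1 - α) : ℝ) : ℂ) * (∫ x in (0:ℝ)..1, Complex.exp (-(z * x)) *
        ((∫ v in (0:ℝ)..1, ψ v * |x - v| ^ (-α) : ℝ) : ℂ)) - Complex.exp (-z) * (lam * φ 1) := by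
  set g : ℝ → ℝ := fun u => ∫ v in (0:ℝ)..1, ψ v * |u - v| ^ (-α) with hg
  have hgi : IntegrableOn g (Ioc 0 1) := by
    have := (ker_mul_int (𝕜 := ℝ) hα (f := fun p : ℝ × ℝ => ψ p.2) (by fun_prop)).integral_prod_left
    simpa [hg, IntegrableOn, intervalIntegral.integral_of_le zero_le_one] using this
  set k : ℝ → ℂ := fun u => ((Real.exp (-(β * u)) * g u : ℝ) : ℂ) with hk
  have hki : IntegrableOn k (Ioc 0 1) := by
    obtain ⟨C, hC⟩ := (isCompact_Icc : IsCompact (Icc (0:ℝ) 1)).exists_bound_of_continuousOn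
      (f := fun u => Real.exp (-(β * u))) (by fun_prop)
    refine Integrable.ofReal (Integrable.bdd_mul (c := C) hgi (by fun_prop) ?_)
    filter_upwards [ae_restrict_mem measurableSet_Ioc] with p hp
    exact hC p (Ioc_subset_Icc_self hp)
  have h1 := tri k hki (z - β)
  set c : ℂ := (((1 - α / 2) * (1 - α) : ℝ) : ℂ) with hc
  have he' : ∀ x ∈ Icc (0:ℝ) 1, (lam : ℂ) * φ x = c * ((Real.exp (β * x) : ℝ) * ∫ u in (0:ℝ)..x, k u) := by
    intro x hx
    rw [← Complex.ofReal_mul, he x hx]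
    simp only [hk, hc]
    rw [intervalIntegral.integral_ofReal]
    push_cast; ring
  have h2 : lam * ∫ x in (0:ℝ)..1, Complex.exp (-(z * x)) * (φ x : ℂ)
      = c * ∫ x in (0:ℝ)..1, Complex.exp (-((z - β) * x)) * ∫ u in (0:ℝ)..x, k u := by
    rw [← intervalIntegral.integral_const_mul, ← intervalIntegral.integral_const_mul]
    refine intervalIntegral.integral_congr fun x hx => ?_
    rw [uIcc_of_le zero_le_one] at hx
    beta_reduce
    have e : -((z - β) * x) = -(z * x) + ((β * x : ℝ) : ℂ) := by push_cast; ring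
    rw [e, Complex.exp_add, ← Complex.ofReal_exp, mul_left_comm, he' x hx]
    ring
  have h3 : ∫ u in (0:ℝ)..1, k u * (Complex.exp (-((z - β) * u)) - Complex.exp (-(z - β)))
      = (∫ u in (0:ℝ)..1, Complex.exp (-(z * u)) * (g u : ℂ))
        - (∫ u in (0:ℝ)..1, k u) * Complex.exp (-(z - β)) := by
    rw [← intervalIntegral.integral_mul_const, ← intervalIntegral.integral_sub]
    · refine intervalIntegral.integral_congr fun u _ => ?_
      beta_reduce
      have e : -((z - β) * u) = -(z * u) + ((β * u : ℝ) : ℂ) := by push_cast; ring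
      rw [e, Complex.exp_add, ← Complex.ofReal_exp]
      have e2 : (Real.exp (β * u) : ℂ) * (Real.exp (-(β * u)) : ℂ) = 1 := by
        rw [← Complex.ofReal_mul, ← Real.exp_add]; simp
      simp only [hk]; push_cast at e2 ⊢
      linear_combination (g u : ℂ) * Complex.exp (-(z * u)) * e2
    · rw [intervalIntegrable_iff_integrableOn_Ioc_of_le zero_le_one]
      obtain ⟨C, hC⟩ := (isCompact_Icc : IsCompact (Icc (0:ℝ) 1)).exists_bound_of_continuousOn
        (f := fun u : ℝ => Complex.exp (-(z * u))) (by fun_prop)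
      refine Integrable.bdd_mul (c := C) hgi.ofReal
        ((by fun_prop : Continuous fun u : ℝ => Complex.exp (-(z * u))).aestronglyMeasurable) ?_
      filter_upwards [ae_restrict_mem measurableSet_Ioc] with p hp
      exact hC p (Ioc_subset_Icc_self hp)
    · rw [intervalIntegrable_iff_integrableOn_Ioc_of_le zero_le_one]
      exact hki.mul_const _
  have h4 := he' 1 ⟨zero_le_one, le_rfl⟩
  rw [h4, mul_left_comm, h2, mul_left_comm, h1, h3, mul_sub]
  have e : -(z - β) = -z + ((β * 1 : ℝ) : ℂ) := by push_cast; ring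
  rw [e, Complex.exp_add, ← Complex.ofReal_exp]
  ring

end FOU
namespace FOU
open MeasureTheory

lemma inner_int {z : ℂ} (hz : z.im ≠ 0) (t : ℝ) {y : ℝ} (hy : y ∈ Icc (0:ℝ) 1) :
    ∫ x in (0:ℝ)..1, Complex.exp (-(z * x)) * ((Real.exp (-(t * |x - y|)) : ℝ) : ℂ)
      = (Complex.exp (-(z * y)) - ((Real.exp (-(t * |0 - y|)) : ℝ) : ℂ)) / ((t:ℂ) - z)
        + (Complex.exp (-(z * y)) - Complex.exp (-z) * ((Real.exp (-(t * |1 - y|)) : ℝ) : ℂ))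
          / ((t:ℂ) + z) := by
  have h1 : (t:ℂ) - z ≠ 0 := fun h => hz (by have := congrArg Complex.im h; simpa using this)
  have h2 : (t:ℂ) + z ≠ 0 := fun h => hz (by have := congrArg Complex.im h; simpa using this)
  rw [← intervalIntegral.integral_add_adjacent_intervals (b := y)
    (Continuous.intervalIntegrable (by fun_prop) _ _)
    (Continuous.intervalIntegrable (by fun_prop) _ _)]
  have e0 : |0 - y| = y := by rw [zero_sub, abs_neg, abs_of_nonneg hy.1]
  have e1 : |1 - y| = 1 - y := abs_of_nonneg (by linarith [hy.2])
  rw [e0, e1]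
  have a1 : ∫ x in (0:ℝ)..y, Complex.exp (-(z * x)) * ((Real.exp (-(t * |x - y|)) : ℝ) : ℂ)
      = Complex.exp (-(t * y)) * ∫ x in (0:ℝ)..y, Complex.exp (-((z - t) * x)) := by
    rw [← intervalIntegral.integral_const_mul]
    refine intervalIntegral.integral_congr fun x hx => ?_
    rw [uIcc_of_le hy.1] at hx
    beta_reduce
    rw [abs_of_nonpos (by linarith [hx.2]), Complex.ofReal_exp, ← Complex.exp_add, ← Complex.exp_add]
    congr 1; push_cast; ring
  have a2 : ∫ x in y..(1:ℝ), Complex.exp (-(z * x)) * ((Real.exp (-(t * |x - y|)) : ℝ) : ℂ)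
      = Complex.exp (t * y) * ∫ x in y..(1:ℝ), Complex.exp (-((z + t) * x)) := by
    rw [← intervalIntegral.integral_const_mul]
    refine intervalIntegral.integral_congr fun x hx => ?_
    rw [uIcc_of_le hy.2] at hx
    beta_reduce
    rw [abs_of_nonneg (by linarith [hx.1]), Complex.ofReal_exp, ← Complex.exp_add, ← Complex.exp_add]
    congr 1; push_cast; ring
  have b1 := int_exp (z - t) 0 y
  have b2 := int_exp (z + t) y 1
  rw [a1, a2]
  congr 1
  · rw [eq_div_iff h1, Complex.ofReal_exp]
    have e : Complex.exp (-(z * y)) = Complex.exp (-(t * y)) * Complex.exp (-((z - t) * y)) := by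
      rw [← Complex.exp_add]; congr 1; ring
    rw [e]
    push_cast
    simp only [mul_zero, Complex.ofReal_zero, neg_zero, Complex.exp_zero] at b1
    linear_combination (-Complex.exp (-(t * y))) * b1
  · rw [eq_div_iff h2, Complex.ofReal_exp]
    have e : Complex.exp (-(z * y)) = Complex.exp (t * y) * Complex.exp (-((z + t) * y)) := by
      rw [← Complex.exp_add]; congr 1; ring
    have e' : Complex.exp (-z) * Complex.exp ((-(t * (1 - y)) : ℝ) : ℂ)
        = Complex.exp (t * y) * Complex.exp (-((z + t) * (1:ℝ))) := by
      rw [← Complex.exp_add, ← Complex.exp_add]; congr 1; push_cast; ring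
    rw [e, e']
    linear_combination (Complex.exp (t * y)) * b2

lemma lapU {ψ : ℝ → ℝ} (hψ : Continuous ψ) {U : ℝ → ℝ → ℝ}
    (hU : ∀ x t : ℝ, U x t = ∫ y in (0:ℝ)..1, ψ y * Real.exp (-(t * |x - y|)))
    {z : ℂ} (hz : z.im ≠ 0) (t : ℝ) :
    ∫ p, Complex.exp (-(z * (p.1 : ℝ))) * (ψ p.2 : ℂ) * ((Real.exp (-(t * |p.1 - p.2|)) : ℝ) : ℂ)
      ∂((volume.restrict (Ioc (0:ℝ) 1)).prod (volume.restrict (Ioc (0:ℝ) 1)))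
    = (∫ x in (0:ℝ)..1, Complex.exp (-(z * x)) * (ψ x : ℂ)) * (1 / ((t:ℂ) - z) + 1 / ((t:ℂ) + z))
      - 1 / ((t:ℂ) - z) * U 0 t - Complex.exp (-z) * (1 / ((t:ℂ) + z) * U 1 t) := by
  have hc : Continuous (fun p : ℝ × ℝ => Complex.exp (-(z * (p.1 : ℝ))) * (ψ p.2 : ℂ) *
      ((Real.exp (-(t * |p.1 - p.2|)) : ℝ) : ℂ)) := by fun_prop
  have hi : Integrable (fun p : ℝ × ℝ => Complex.exp (-(z * (p.1 : ℝ))) * (ψ p.2 : ℂ) *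
      ((Real.exp (-(t * |p.1 - p.2|)) : ℝ) : ℂ))
      ((volume.restrict (Ioc (0:ℝ) 1)).prod (volume.restrict (Ioc (0:ℝ) 1))) := by
    rw [Measure.prod_restrict]
    exact (hc.continuousOn.integrableOn_compact (isCompact_Icc.prod isCompact_Icc)).mono_set
      (Set.prod_mono Ioc_subset_Icc_self Ioc_subset_Icc_self)
  rw [integral_prod_symm _ hi]
  have h1 : ∀ y ∈ Ioc (0:ℝ) 1, (∫ x in Ioc (0:ℝ) 1, Complex.exp (-(z * x)) * (ψ y : ℂ) *
      ((Real.exp (-(t * |x - y|)) : ℝ) : ℂ)) =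
      (Complex.exp (-(z * y)) * (ψ y : ℂ)) * (1 / ((t:ℂ) - z) + 1 / ((t:ℂ) + z))
      - ((ψ y * Real.exp (-(t * |0 - y|)) : ℝ) : ℂ) * (1 / ((t:ℂ) - z))
      - ((ψ y * Real.exp (-(t * |1 - y|)) : ℝ) : ℂ) * (Complex.exp (-z) * (1 / ((t:ℂ) + z))) := by
    intro y hy
    have := inner_int hz t (Ioc_subset_Icc_self hy)
    rw [intervalIntegral.integral_of_le zero_le_one] at this
    have e : ∀ x : ℝ, Complex.exp (-(z * x)) * (ψ y : ℂ) * ((Real.exp (-(t * |x - y|)) : ℝ) : ℂ)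
      = (ψ y : ℂ) * (Complex.exp (-(z * x)) * ((Real.exp (-(t * |x - y|)) : ℝ) : ℂ)) := fun x => by ring
    simp only [e]
    rw [MeasureTheory.integral_const_mul, this, Complex.ofReal_mul, Complex.ofReal_mul]
    ring
  rw [setIntegral_congr_fun measurableSet_Ioc h1, ← intervalIntegral.integral_of_le zero_le_one,
    intervalIntegral.integral_sub, intervalIntegral.integral_sub,
    intervalIntegral.integral_mul_const, intervalIntegral.integral_mul_const,
    intervalIntegral.integral_mul_const, intervalIntegral.integral_ofReal,
    intervalIntegral.integral_ofReal, ← hU, ← hU]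
  · ring
  all_goals exact Continuous.intervalIntegrable (by fun_prop) _ _

lemma lapD {α : ℝ} (hα : α ∈ Set.Ioo (0:ℝ) 1) {ψ : ℝ → ℝ} (hψ : Continuous ψ) (z : ℂ) :
    (Real.Gamma α : ℂ) * (∫ x in (0:ℝ)..1, Complex.exp (-(z * x)) *
        ((∫ v in (0:ℝ)..1, ψ v * |x - v| ^ (-α) : ℝ) : ℂ))
    = ∫ t in Ioi (0:ℝ), ((t ^ (α - 1) : ℝ) : ℂ) *
      ∫ p, Complex.exp (-(z * (p.1 : ℝ))) * (ψ p.2 : ℂ) * ((Real.exp (-(t * |p.1 - p.2|)) : ℝ) : ℂ)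
      ∂((volume.restrict (Ioc (0:ℝ) 1)).prod (volume.restrict (Ioc (0:ℝ) 1))) := by
  set J := volume.restrict (Ioc (0:ℝ) 1) with hJ
  set f : ℝ × ℝ → ℂ := fun p => Complex.exp (-(z * (p.1 : ℝ))) * (ψ p.2 : ℂ) with hf
  have hfc : Continuous f := by fun_prop
  have hpos : ∀ p : ℝ × ℝ, p.1 ≠ p.2 → 0 < |p.1 - p.2| := fun p hp => abs_pos.mpr (sub_ne_zero.mpr hp)
  have hF : Integrable (Function.uncurry fun (p : ℝ × ℝ) (t : ℝ) =>
      f p * ((t ^ (α - 1) * Real.exp (-(t * |p.1 - p.2|)) : ℝ) : ℂ))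
      ((J.prod J).prod (volume.restrict (Ioi (0:ℝ)))) := by
    rw [integrable_prod_iff]
    · constructor
      · filter_upwards [ne_ae] with p hp
        have hg : Integrable (fun t : ℝ => ((t ^ (α - 1) * Real.exp (-(t * |p.1 - p.2|)) : ℝ) : ℂ))
            (volume.restrict (Ioi (0:ℝ))) := (gam_int hα.1 (hpos p hp)).ofReal
        exact hg.const_mul (f p)
      · have := ker_mul_int (𝕜 := ℝ) hα (f := fun p => ‖f p‖ * Real.Gamma α) (by fun_prop)
        refine this.congr ?_
        filter_upwards [ne_ae] with p hp
        have e := gam_eq hα.1 (hpos p hp)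
        simp only [Function.uncurry, norm_mul]
        rw [MeasureTheory.integral_const_mul, mul_assoc]
        simp only [RCLike.ofReal_real_eq_id, id]
        rw [← e]
        congr 1
        refine setIntegral_congr_fun measurableSet_Ioi fun t ht => ?_
        beta_reduce
        rw [Complex.norm_real, Real.norm_of_nonneg]
        exact mul_nonneg (Real.rpow_nonneg (le_of_lt ht) _) (Real.exp_pos _).le
    · refine Measurable.aestronglyMeasurable ?_
      have := hfc.measurable
      change Measurable (fun q : (ℝ × ℝ) × ℝ =>
        f q.1 * ((q.2 ^ (α - 1) * Real.exp (-(q.2 * |q.1.1 - q.1.2|)) : ℝ) : ℂ))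
      fun_prop
  have hsw := integral_integral_swap hF
  have hR : ∫ t in Ioi (0:ℝ), ((t ^ (α - 1) : ℝ) : ℂ) *
      ∫ p, f p * ((Real.exp (-(t * |p.1 - p.2|)) : ℝ) : ℂ) ∂(J.prod J)
      = ∫ t in Ioi (0:ℝ), ∫ p, f p * ((t ^ (α - 1) * Real.exp (-(t * |p.1 - p.2|)) : ℝ) : ℂ) ∂(J.prod J) := by
    refine integral_congr_ae (ae_of_all _ fun t => ?_)
    beta_reduce
    rw [← MeasureTheory.integral_const_mul]
    refine integral_congr_ae (ae_of_all _ fun p => ?_)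
    beta_reduce
    push_cast; ring
  rw [hR, ← hsw]
  have hL : ∫ p, (∫ t in Ioi (0:ℝ), f p * ((t ^ (α - 1) * Real.exp (-(t * |p.1 - p.2|)) : ℝ) : ℂ)) ∂(J.prod J)
      = ∫ p, (Real.Gamma α : ℂ) * (f p * ((|p.1 - p.2| ^ (-α) : ℝ) : ℂ)) ∂(J.prod J) := by
    refine integral_congr_ae ?_
    filter_upwards [ne_ae] with p hp
    rw [MeasureTheory.integral_const_mul, integral_complex_ofReal, gam_eq hα.1 (hpos p hp)]
    push_cast; ring
  have hk : Integrable (fun p : ℝ × ℝ => f p * ((|p.1 - p.2| ^ (-α) : ℝ) : ℂ)) (J.prod J) :=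
    ker_mul_int (𝕜 := ℂ) hα hfc
  rw [hL, MeasureTheory.integral_const_mul, integral_prod _ hk,
    intervalIntegral.integral_of_le zero_le_one]
  congr 1
  refine integral_congr_ae (ae_of_all _ fun x => ?_)
  beta_reduce
  rw [intervalIntegral.integral_of_le zero_le_one, ← integral_complex_ofReal,
    ← MeasureTheory.integral_const_mul]
  refine integral_congr_ae (ae_of_all _ fun v => ?_)
  simp only [hf]
  push_cast; ring

lemma final_split {α : ℝ} (hα : α ∈ Set.Ioo (0:ℝ) 1) {ψ : ℝ → ℝ} (hψ : Continuous ψ) {U : ℝ → ℝ → ℝ}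
    (hU : ∀ x t : ℝ, U x t = ∫ y in (0:ℝ)..1, ψ y * Real.exp (-(t * |x - y|)))
    {z : ℂ} (hz : z.im ≠ 0) :
    (Real.Gamma α : ℂ) * (∫ x in (0:ℝ)..1, Complex.exp (-(z * x)) *
        ((∫ v in (0:ℝ)..1, ψ v * |x - v| ^ (-α) : ℝ) : ℂ))
    = (∫ x in (0:ℝ)..1, Complex.exp (-(z * x)) * (ψ x : ℂ)) *
        (∫ t in Set.Ioi (0:ℝ), 2 * ((t : ℂ) ^ (α : ℂ)) / ((t : ℂ) ^ 2 - z ^ 2))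
      - (∫ t in Set.Ioi (0:ℝ), ((t ^ (α - 1) : ℝ) : ℂ) / ((t : ℂ) - z) * (U 0 t : ℂ))
      - Complex.exp (-z) *
        (∫ t in Set.Ioi (0:ℝ), ((t ^ (α - 1) : ℝ) : ℂ) / ((t : ℂ) - (-z)) * (U 1 t : ℂ)) := by
  have hz' : (-z).im ≠ 0 := by simpa using hz
  have i0 := t_int hα hz
  have i1 := t_int hα hz'
  have hUc : ∀ x, Continuous (U x) := fun x => by
    have : U x = fun t => ∫ y in (0:ℝ)..1, ψ y * Real.exp (-(t * |x - y|)) := funext (hU x)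
    rw [this]
    exact intervalIntegral.continuous_parametric_intervalIntegral_of_continuous' (by fun_prop) _ _
  obtain ⟨C, hC⟩ := (isCompact_Icc : IsCompact (Icc (0:ℝ) 1)).exists_bound_of_continuousOn
      hψ.continuousOn
  have hUb : ∀ x t, 0 < t → ‖U x t‖ ≤ C := fun x t ht => by
    rw [hU]
    have := intervalIntegral.norm_integral_le_of_norm_le_const (a := 0) (b := 1) (C := C)
      (f := fun y => ψ y * Real.exp (-(t * |x - y|))) (fun y hy => by
        rw [uIoc_of_le zero_le_one] at hy
        rw [norm_mul, Real.norm_of_nonneg (Real.exp_pos _).le]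
        have h1 : Real.exp (-(t * |x - y|)) ≤ 1 := Real.exp_le_one_iff.mpr (by
          have : 0 ≤ t * |x - y| := by positivity
          linarith)
        exact (mul_le_of_le_one_right (norm_nonneg _) h1).trans (hC y (Ioc_subset_Icc_self hy)))
    simpa using this
  have iU : ∀ (w : ℂ) (x : ℝ), w.im ≠ 0 →
      IntegrableOn (fun t : ℝ => ((t ^ (α - 1) : ℝ) : ℂ) / ((t : ℂ) - w) * (U x t : ℂ)) (Ioi 0) := by
    intro w x hw
    refine Integrable.mul_bdd (c := C) (t_int hα hw)
      (Complex.continuous_ofReal.comp (hUc x)).aestronglyMeasurable ?_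
    filter_upwards [ae_restrict_mem measurableSet_Ioi] with t ht
    rw [Complex.norm_real]
    exact hUb x t ht
  have hΛ : (∫ t in Set.Ioi (0:ℝ), 2 * ((t : ℂ) ^ (α : ℂ)) / ((t : ℂ) ^ 2 - z ^ 2))
      = ∫ t in Set.Ioi (0:ℝ), (((t ^ (α - 1) : ℝ) : ℂ) / ((t : ℂ) - z)
          + ((t ^ (α - 1) : ℝ) : ℂ) / ((t : ℂ) - (-z))) := by
    refine setIntegral_congr_fun measurableSet_Ioi fun t ht => ?_
    beta_reduce
    have ht0 : (0:ℝ) < t := ht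
    have h1 : (t:ℂ) - z ≠ 0 := fun h => hz (by have := congrArg Complex.im h; simpa using this)
    have h2 : (t:ℂ) - (-z) ≠ 0 := fun h => hz (by have := congrArg Complex.im h; simpa using this)
    have h3 : (t:ℂ) ^ 2 - z ^ 2 ≠ 0 := by
      have : (t:ℂ) ^ 2 - z ^ 2 = (t - z) * (t - (-z)) := by ring
      rw [this]; exact mul_ne_zero h1 h2
    have e : (t : ℂ) ^ (α : ℂ) = ((t ^ (α - 1) : ℝ) : ℂ) * t := by
      rw [← Complex.ofReal_cpow ht0.le, ← Complex.ofReal_mul, Real.rpow_sub_one ht0.ne']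
      congr 1; field_simp
    rw [e, div_add_div _ _ h1 h2, div_eq_div_iff h3 (mul_ne_zero h1 h2)]
    ring
  rw [lapD hα hψ z, hΛ, ← MeasureTheory.integral_const_mul, ← MeasureTheory.integral_const_mul,
    ← MeasureTheory.integral_sub, ← MeasureTheory.integral_sub]
  · refine integral_congr_ae (ae_of_all _ fun t => ?_)
    beta_reduce
    rw [lapU hψ hU hz, sub_neg_eq_add]
    ring
  · exact ((i0.add i1).const_mul _).sub (iU z 0 hz)
  · exact (iU _ 1 hz').const_mul _
  · exact (i0.add i1).const_mul _
  · exact iU z 0 hz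

end FOU
/-- Representation of the Laplace transform of an eigenfunction of the fOU covariance
operator via the sectionally holomorphic functions `Φ₀`, `Φ₁`. -/
theorem fOU_laplace_transform_representation
    (α β lam : ℝ) (hα : α ∈ Set.Ioo (0:ℝ) 1) (hlam : 0 < lam)
    (φ : ℝ → ℝ) (hφ : ContDiffOn ℝ 1 φ (Icc 0 1))
    (heig : ∀ x ∈ Icc (0:ℝ) 1,
      (∫ y in (0:ℝ)..1, fOUkernelHigh α β x y * φ y) = lam * φ x)
    (ψ : ℝ → ℝ)
    (hψ : ∀ x : ℝ, ψ x = Real.exp (-(β * x)) * ∫ r in x..(1:ℝ), Real.exp (β * r) * φ r)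
    (U : ℝ → ℝ → ℝ)
    (hU : ∀ x t : ℝ, U x t = ∫ y in (0:ℝ)..1, ψ y * Real.exp (-(t * |x - y|)))
    (Φ₀ Φ₁ : ℂ → ℂ)
    (hΦ₀ : ∀ z : ℂ, Φ₀ z =
      -(((Real.Gamma α * lam / ((1 - α / 2) * (1 - α)) : ℝ) : ℂ)) * ((β : ℂ) - z) * (ψ 0 : ℂ)
        + ∫ t in Set.Ioi (0:ℝ), ((t ^ (α - 1) : ℝ) : ℂ) / ((t : ℂ) - z) * (U 0 t : ℂ))
    (hΦ₁ : ∀ z : ℂ, Φ₁ z =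
      -(((Real.Gamma α * lam / ((1 - α / 2) * (1 - α)) : ℝ) : ℂ))
          * ((derivWithin ψ (Set.Icc (0:ℝ) 1) 1 : ℝ) : ℂ)
        + ∫ t in Set.Ioi (0:ℝ), ((t ^ (α - 1) : ℝ) : ℂ) / ((t : ℂ) - z) * (U 1 t : ℂ))
    (Lap : ℂ → ℂ)
    (hLap : ∀ z : ℂ, Lap z = ∫ x in (0:ℝ)..1, Complex.exp (-(z * x)) * (φ x : ℂ)) :
    ∀ z : ℂ, z.im ≠ 0 → LambdaFn α β lam z ≠ 0 →
      Lap z = Lap (-(β : ℂ))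
        - ((z + (β : ℂ)) / LambdaFn α β lam z) * (Φ₀ z + Complex.exp (-z) * Φ₁ (-z)) := by
  intro z hz hΛ
  -- replace φ by a continuous extension
  obtain ⟨χ, hχc, hχ⟩ : ∃ χ : ℝ → ℝ, Continuous χ ∧ ∀ x ∈ Icc (0:ℝ) 1, χ x = φ x := by
    refine ⟨IccExtend zero_le_one ((Icc (0:ℝ) 1).domRestrict φ),
      (continuousOn_iff_continuous_domRestrict.mp hφ.continuousOn).Icc_extend', fun x hx => ?_⟩
    rw [IccExtend_of_mem _ _ hx]; rfl
  set η : ℝ → ℝ := fun x => Real.exp (-(β * x)) * ∫ r in x..(1:ℝ), Real.exp (β * r) * χ r with hη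
  have hηψ : ∀ x ∈ Icc (0:ℝ) 1, η x = ψ x := by
    intro x hx
    have h : ∫ r in x..(1:ℝ), Real.exp (β * r) * χ r = ∫ r in x..(1:ℝ), Real.exp (β * r) * φ r := by
      refine intervalIntegral.integral_congr fun r hr => ?_
      rw [uIcc_of_le hx.2] at hr
      beta_reduce
      rw [hχ r ⟨hx.1.trans hr.1, hr.2⟩]
    rw [hψ, ← h]
  have hkc : Continuous (fun r : ℝ => Real.exp (β * r) * χ r) := by fun_prop
  have hprim : ∀ x, HasDerivAt (fun x : ℝ => ∫ r in x..(1:ℝ), Real.exp (β * r) * χ r)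
      (-(Real.exp (β * x) * χ x)) x := fun x =>
    intervalIntegral.integral_hasDerivAt_left (hkc.intervalIntegrable _ _)
      (hkc.stronglyMeasurableAtFilter _ _) hkc.continuousAt
  have hηc : Continuous η := by
    have : Continuous (fun x : ℝ => ∫ r in x..(1:ℝ), Real.exp (β * r) * χ r) :=
      continuous_iff_continuousAt.mpr fun x => (hprim x).continuousAt
    fun_prop
  have hd : derivWithin ψ (Set.Icc (0:ℝ) 1) 1 = - φ 1 := by
    have h1 : HasDerivAt (fun x : ℝ => Real.exp (-(β * x))) (Real.exp (-(β * 1)) * (-(β * 1))) 1 :=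
      (((hasDerivAt_id (1:ℝ)).const_mul β).neg).exp
    have h2 := (h1.mul (hprim 1)).hasDerivWithinAt (s := Icc (0:ℝ) 1)
    have h3 : HasDerivWithinAt ψ _ (Icc (0:ℝ) 1) 1 :=
      h2.congr (fun x hx => (hηψ x hx).symm) (hηψ 1 ⟨zero_le_one, le_rfl⟩).symm
    rw [h3.derivWithin (uniqueDiffOn_Icc zero_lt_one 1 ⟨zero_le_one, le_rfl⟩),
      hχ 1 ⟨zero_le_one, le_rfl⟩]
    have e : Real.exp (-(β * 1)) * Real.exp (β * 1) = 1 := by rw [← Real.exp_add]; simp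
    rw [intervalIntegral.integral_same]
    linear_combination (-φ 1) * e
  have hUη : ∀ x t : ℝ, U x t = ∫ y in (0:ℝ)..1, η y * Real.exp (-(t * |x - y|)) := by
    intro x t
    rw [hU]
    refine intervalIntegral.integral_congr fun r hr => ?_
    rw [uIcc_of_le zero_le_one] at hr
    beta_reduce
    rw [hηψ r hr]
  have hLapχ : ∀ z : ℂ, Lap z = ∫ x in (0:ℝ)..1, Complex.exp (-(z * x)) * (χ x : ℂ) := by
    intro z
    rw [hLap]
    refine intervalIntegral.integral_congr fun r hr => ?_
    rw [uIcc_of_le zero_le_one] at hr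
    beta_reduce
    rw [hχ r hr]
  have heχ : ∀ x ∈ Icc (0:ℝ) 1, lam * χ x = (1 - α / 2) * (1 - α) *
      (Real.exp (β * x) * ∫ u in (0:ℝ)..x, Real.exp (-(β * u)) *
        ∫ v in (0:ℝ)..1, η v * |u - v| ^ (-α)) := by
    intro x hx
    rw [← FOU.kerA hα hχc (fun _ => rfl) hx, hχ x hx, ← heig x hx]
    refine intervalIntegral.integral_congr fun r hr => ?_
    rw [uIcc_of_le zero_le_one] at hr
    beta_reduce
    rw [hχ r hr]
  have A := FOU.lapPsi hχc (ψ := η) (fun _ => rfl) z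
  have A' := FOU.lapPsi hχc (ψ := η) (fun _ => rfl) (-(β : ℂ))
  have B := FOU.lapG hα hηc heχ z
  have D := FOU.final_split hα hηc hUη hz
  have hc : (((1 - α / 2) * (1 - α) : ℝ) : ℂ) ≠ 0 := by
    rw [Complex.ofReal_ne_zero]
    exact (mul_pos (by linarith [hα.2]) (by linarith [hα.2])).ne'
  rw [← hLapχ] at A A' B
  rw [hχ 1 ⟨zero_le_one, le_rfl⟩] at B
  rw [neg_add_cancel, zero_mul, sub_zero] at A'
  rw [A', hΦ₀, hΦ₁, hd, ← hηψ 0 ⟨le_rfl, zero_le_one⟩]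
  have hΛd : LambdaFn α β lam z = ((Real.Gamma α * lam / ((1 - α / 2) * (1 - α)) : ℝ) : ℂ) *
      (z ^ 2 - (β : ℂ) ^ 2) +
    ∫ t in Set.Ioi (0:ℝ), 2 * ((t : ℂ) ^ (α : ℂ)) / ((t : ℂ) ^ 2 - z ^ 2) := rfl
  have ec : ((Real.Gamma α * lam / ((1 - α / 2) * (1 - α)) : ℝ) : ℂ)
      * (((1 - α / 2) * (1 - α) : ℝ) : ℂ) = (Real.Gamma α : ℂ) * lam := by
    rw [← Complex.ofReal_mul, ← Complex.ofReal_mul, div_mul_cancel₀]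
    exact_mod_cast hc
  generalize ((Real.Gamma α * lam / ((1 - α / 2) * (1 - α)) : ℝ) : ℂ) = M at *
  generalize (((1 - α / 2) * (1 - α) : ℝ) : ℂ) = c at *
  generalize (∫ t in Set.Ioi (0:ℝ), 2 * ((t : ℂ) ^ (α : ℂ)) / ((t : ℂ) ^ 2 - z ^ 2)) = I at *
  generalize (∫ t in Set.Ioi (0:ℝ), ((t ^ (α - 1) : ℝ) : ℂ) / ((t : ℂ) - z) * (U 0 t : ℂ)) = I0 at *
  generalize (∫ t in Set.Ioi (0:ℝ), ((t ^ (α - 1) : ℝ) : ℂ) / ((t : ℂ) - (-z)) * (U 1 t : ℂ)) = I1 at *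
  generalize (∫ x in (0:ℝ)..1, Complex.exp (-(z * x)) *
        ((∫ v in (0:ℝ)..1, η v * |x - v| ^ (-α) : ℝ) : ℂ)) = G at *
  generalize (∫ x in (0:ℝ)..1, Complex.exp (-(z * x)) * (η x : ℂ)) = P at *
  generalize LambdaFn α β lam z = L at *
  have key : P * L = -M * ((β : ℂ) - z) * (η 0 : ℂ) + I0
      + Complex.exp (-z) * (-M * ((-φ 1 : ℝ) : ℂ) + I1) := by
    apply mul_left_cancel₀ hc
    rw [hΛd]
    rw [A] at B
    push_cast
    linear_combination (-c) * D - (Real.Gamma α : ℂ) * B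
      + (P * (z ^ 2 - β ^ 2) + ((β : ℂ) - z) * (η 0 : ℂ) - Complex.exp (-z) * φ 1) * ec
  rw [A, ← key]
  field_simp
end
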